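/- Let A be an n × n complex Hermitian matrix whose eigenvalues λ_1, …, λ_n all lie in [−1, 1], with spectral decomposition A = U·diag(λ_1, …, λ_n)·U* (U unitary). Then for every real m > 0 and all integers k ≥ 1 and 1 ≤ k' ≤ k, ‖P − ρ(A)‖₂ ≤ d^m_{k',k}·J*/(π (k'+1)) + m·C_m·J*/(k+1) + m·π²/(3 (k+1)²), where J* = max_{1 ≤ j ≤ n} J(arccos λ_j). -/

import Mathlib

open Real MeasureTheory Matrix Polynomial

/-- The step function on ℝ: `1` on `(a, b)`, `1/2` at `a` and `b`, `0` otherwise. -/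
noncomputable def stepS (a b x : ℝ) : ℝ :=
  if x = a ∨ x = b then 1 / 2 else if x ∈ Set.Ioo a b then 1 else 0

/-- Fourier coefficients of the step function (with `α = arccos a`, `β = arccos b`). -/
noncomputable def fourierC (α β : ℝ) : ℕ → ℝ
  | 0 => (α - β) / Real.pi
  | (j + 1) => (2 / Real.pi) * (Real.sin ((j + 1) * α) - Real.sin ((j + 1) * β)) / (j + 1)

/-- Exponent-`m` Lanczos damping factors `d^m_{j,k}`, with `d^m_{0,k} = 1`. -/
noncomputable def dampL (m : ℝ) (k j : ℕ) : ℝ :=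
  if j = 0 then 1
  else (Real.sin (j * Real.pi / (k + 1)) / (j * Real.pi / (k + 1))) ^ m

/-- The constant `C_m = ∫_0^π (sin u)^{m-1}(sin u - u cos u)/u^{m+2} du`. -/
noncomputable def lanczosCm (m : ℝ) : ℝ :=
  ∫ u in Set.Ioo (0 : ℝ) Real.pi,
    Real.sin u ^ (m - 1) * (Real.sin u - u * Real.cos u) / u ^ (m + 2)

/-- The quantity `J(θ)` controlling the pointwise Fourier error. -/
noncomputable def Jfun (α β θ : ℝ) : ℝ :=
  if θ = α then
    1 / |Real.sin α| + 1 / |Real.sin ((α + β) / 2)| + 1 / |Real.sin ((α - β) / 2)|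
  else if θ = β then
    1 / |Real.sin β| + 1 / |Real.sin ((α + β) / 2)| + 1 / |Real.sin ((α - β) / 2)|
  else
    1 / |Real.sin ((θ + α) / 2)| + 1 / |Real.sin ((θ - α) / 2)|
      + 1 / |Real.sin ((θ + β) / 2)| + 1 / |Real.sin ((θ - β) / 2)|

/-- The damped Chebyshev filter applied to a matrix:
`ρ(A) = ∑_{j=0}^{k'} c_j d^m_{j,k} T_j(A)`. -/
noncomputable def chebFilter (a b m : ℝ) (k k' : ℕ) {n : ℕ}
    (A : Matrix (Fin n) (Fin n) ℂ) : Matrix (Fin n) (Fin n) ℂ :=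
  ∑ j ∈ Finset.range (k' + 1),
    ((fourierC (Real.arccos a) (Real.arccos b) j * dampL m k j : ℝ) : ℂ)
      • (Polynomial.aeval A (Polynomial.Chebyshev.T ℂ (j : ℤ)))


lemma logsum_aux (z : ℂ) (hz : ‖z‖ ≤ 1) (N p : ℕ) :
    ‖(1 - z) * (∑ i ∈ Finset.range (p + 1), z ^ (N + i + 1) / ((N + i + 1 : ℕ) : ℂ))
      + z ^ (N + p + 2) / ((N + p + 1 : ℕ) : ℂ)‖
      ≤ 2 / (N + 1 : ℝ) - 1 / ((N + p + 1 : ℕ) : ℝ) := by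
  induction p with
  | zero =>
    have h : (1 - z) * (∑ i ∈ Finset.range (0 + 1), z ^ (N + i + 1) / ((N + i + 1 : ℕ) : ℂ))
      + z ^ (N + 0 + 2) / ((N + 0 + 1 : ℕ) : ℂ) = z ^ (N + 1) / ((N + 1 : ℕ) : ℂ) := by
      simp only [zero_add, Finset.sum_range_one, add_zero]
      ring
    rw [h, norm_div, norm_pow, Complex.norm_natCast]
    have h1 : ‖z‖ ^ (N + 1) ≤ 1 := pow_le_one₀ (norm_nonneg _) hz
    have h2 : ‖z‖ ^ (N + 1) / ((N + 1 : ℕ) : ℝ) ≤ 1 / ((N + 1 : ℕ) : ℝ) := by gcongr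
    refine h2.trans (le_of_eq ?_)
    push_cast
    ring
  | succ p ih =>
    have hc1 : ((N : ℂ) + p + 1) ≠ 0 := by exact_mod_cast Nat.succ_ne_zero (N + p)
    have hc2 : ((N : ℂ) + p + 1 + 1) ≠ 0 := by exact_mod_cast Nat.succ_ne_zero (N + p + 1)
    have h : (1 - z) * (∑ i ∈ Finset.range (p + 1 + 1), z ^ (N + i + 1) / ((N + i + 1 : ℕ) : ℂ))
      + z ^ (N + (p + 1) + 2) / ((N + (p + 1) + 1 : ℕ) : ℂ)
      = ((1 - z) * (∑ i ∈ Finset.range (p + 1), z ^ (N + i + 1) / ((N + i + 1 : ℕ) : ℂ))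
      + z ^ (N + p + 2) / ((N + p + 1 : ℕ) : ℂ)) + 
       z ^ (N + p + 2) * ((1 / (N + p + 1 + 1 : ℝ) - 1 / (N + p + 1 : ℝ) : ℝ) : ℂ) := by
      rw [Finset.sum_range_succ _ (p + 1)]
      push_cast
      ring
    rw [h]
    refine (norm_add_le _ _).trans ?_
    have h3 : ‖z ^ (N + p + 2) * ((1 / (N + p + 1 + 1 : ℝ) - 1 / (N + p + 1 : ℝ) : ℝ) : ℂ)‖
       ≤ 1 / (N + p + 1 : ℝ) - 1 / (N + p + 1 + 1 : ℝ) := by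
      rw [norm_mul, norm_pow, Complex.norm_real, Real.norm_eq_abs]
      have h1 : ‖z‖ ^ (N + p + 2) ≤ 1 := pow_le_one₀ (norm_nonneg _) hz
      have h4 : 1 / (N + p + 1 + 1 : ℝ) ≤ 1 / (N + p + 1 : ℝ) := by
        apply one_div_le_one_div_of_le (by positivity); linarith
      rw [abs_of_nonpos (by linarith)]
      nlinarith
    push_cast at *
    have : (N : ℝ) + (p + 1) + 1 = N + p + 1 + 1 := by ring
    rw [this]
    linarith

lemma logsum_aux2 (z : ℂ) (hz : ‖z‖ ≤ 1) (N p : ℕ) :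
    ‖(1 - z) * (∑ i ∈ Finset.range p, z ^ (N + i + 1) / ((N + i + 1 : ℕ) : ℂ))‖
      ≤ 2 / (N + 1 : ℝ) := by
  cases p with
  | zero => simp; positivity
  | succ p =>
    have h := logsum_aux z hz N p
    have h1 : ‖z ^ (N + p + 2) / ((N + p + 1 : ℕ) : ℂ)‖ ≤ 1 / ((N + p + 1 : ℕ) : ℝ) := by
      rw [norm_div, norm_pow, Complex.norm_natCast]
      have h1 : ‖z‖ ^ (N + p + 2) ≤ 1 := pow_le_one₀ (norm_nonneg _) hz
      gcongr
    have h2 := norm_sub_le ((1 - z) * (∑ i ∈ Finset.range (p + 1), z ^ (N + i + 1) / ((N + i + 1 : ℕ) : ℂ))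
      + z ^ (N + p + 2) / ((N + p + 1 : ℕ) : ℂ)) (z ^ (N + p + 2) / ((N + p + 1 : ℕ) : ℂ))
    rw [add_sub_cancel_right] at h2
    linarith

lemma logsum_lt (z : ℂ) (hz : ‖z‖ < 1) (N : ℕ) :
    ‖(1 - z) * (-Complex.log (1 - z) - ∑ i ∈ Finset.range N, z ^ (i + 1) / ((i + 1 : ℕ) : ℂ))‖
      ≤ 2 / (N + 1 : ℝ) := by
  have hs := (hasSum_nat_add_iff' 1).2 (Complex.hasSum_taylorSeries_neg_log hz)
  have ht := hs.tendsto_sum_nat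
  have ht2 := ht.comp (Filter.tendsto_add_atTop_nat N)
  have ht3 := ((ht2.sub_const (∑ i ∈ Finset.range N, z ^ (i + 1) / ((i + 1 : ℕ) : ℂ))).const_mul
    (1 - z)).norm
  simp only [Finset.sum_range_one, pow_zero, Nat.cast_zero, div_zero, sub_zero] at ht3
  refine le_of_tendsto ht3 (Filter.Eventually.of_forall fun p => ?_)
  have := logsum_aux2 z hz.le N p
  simp only [Function.comp]
  rw [add_comm p N, Finset.sum_range_add, add_sub_cancel_left]
  exact this

lemma logsum_le (z : ℂ) (hz : ‖z‖ = 1) (hz1 : z ≠ 1) (N : ℕ) :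
    ‖(1 - z) * (-Complex.log (1 - z) - ∑ i ∈ Finset.range N, z ^ (i + 1) / ((i + 1 : ℕ) : ℂ))‖
      ≤ 2 / (N + 1 : ℝ) := by
  have hre : z.re < 1 := by
    refine lt_of_le_of_ne (hz ▸ Complex.re_le_norm z) fun h => hz1 ?_
    have h2 : z.re ^ 2 + z.im ^ 2 = 1 := by
      have := Complex.sq_norm z
      rw [hz, Complex.normSq_apply] at this
      nlinarith
    have : z.im = 0 := by
      rw [h] at h2
      have : z.im ^ 2 = 0 := by linarith
      exact pow_eq_zero_iff (two_ne_zero) |>.1 this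
    apply Complex.ext <;> simp [h, this]
  have hsl : (1 - z) ∈ Complex.slitPlane := by
    left; simp [hre]
  have hcont : ContinuousAt (fun r : ℝ => ‖(1 - r * z) * (-Complex.log (1 - r * z)
     - ∑ i ∈ Finset.range N, (r * z) ^ (i + 1) / ((i + 1 : ℕ) : ℂ))‖) 1 := by
    have hl : ContinuousAt (fun r : ℝ => Complex.log (1 - r * z)) 1 := by
      apply ContinuousAt.clog
      · fun_prop
      · simpa using hsl
    apply ContinuousAt.norm
    apply ContinuousAt.mul (by fun_prop)
    apply ContinuousAt.sub hl.neg
    fun_prop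
  have ht := hcont.tendsto.mono_left (nhdsWithin_le_nhds (s := Set.Iio 1))
  simp only [Complex.ofReal_one, one_mul] at ht
  refine le_of_tendsto ht ?_
  filter_upwards [Ioo_mem_nhdsLT (show (0 : ℝ) < 1 by norm_num)] with r hr
  apply logsum_lt
  rw [norm_mul, hz, Complex.norm_real, Real.norm_eq_abs, abs_of_pos hr.1, mul_one]
  exact hr.2

/-- sawtooth -/
noncomputable def sawS (x : ℝ) : ℝ := (-Complex.log (1 - Complex.exp (x * Complex.I))).im

lemma one_sub_exp (x : ℝ) : 1 - Complex.exp (x * Complex.I)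
    = ((2 * Real.sin (x / 2) : ℝ) : ℂ) * (Complex.cos (((x - π) / 2 : ℝ) : ℂ) + Complex.sin (((x - π) / 2 : ℝ) : ℂ) * Complex.I) := by
  have e1 : Real.cos ((x - π) / 2) = Real.sin (x / 2) := by
    rw [sub_div, Real.cos_sub_pi_div_two]
  have e2 : Real.sin ((x - π) / 2) = - Real.cos (x / 2) := by
    rw [sub_div, Real.sin_sub_pi_div_two]
  have e3 : Real.cos x = 1 - 2 * Real.sin (x / 2) ^ 2 := by
    have := Real.cos_two_mul (x / 2)
    rw [mul_div_cancel₀ x two_ne_zero] at this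
    nlinarith [Real.sin_sq_add_cos_sq (x / 2)]
  have e4 : Real.sin x = 2 * Real.sin (x / 2) * Real.cos (x / 2) := by
    have := Real.sin_two_mul (x / 2)
    rwa [mul_div_cancel₀ x two_ne_zero] at this
  rw [Complex.exp_mul_I, ← Complex.ofReal_cos, ← Complex.ofReal_sin, ← Complex.ofReal_cos, ← Complex.ofReal_sin, e1, e2, e3, e4]
  push_cast
  ring

lemma sawS_pos {x : ℝ} (h0 : 0 < x) (h1 : x < 2 * π) : sawS x = (π - x) / 2 := by
  have hs : 0 < Real.sin (x / 2) := Real.sin_pos_of_pos_of_lt_pi (by linarith) (by linarith)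
  rw [sawS, one_sub_exp, Complex.neg_im, Complex.log_im,
    Complex.arg_mul_cos_add_sin_mul_I (by positivity) ⟨by linarith, by linarith⟩]
  ring

lemma sawS_zero : sawS 0 = 0 := by simp [sawS]

lemma sawS_neg {x : ℝ} (h0 : x < 0) (h1 : -(2 * π) < x) : sawS x = -(π + x) / 2 := by
  have hs : Real.sin (x / 2) < 0 := Real.sin_neg_of_neg_of_neg_pi_lt (by linarith) (by linarith)
  have h := Complex.arg_mul_cos_add_sin_mul_I (r := -(2 * Real.sin (x / 2))) (by linarith) (θ := (x + π) / 2) ⟨by linarith, by linarith⟩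
  have e : ((-(2 * Real.sin (x / 2)) : ℝ) : ℂ) * (Complex.cos (((x + π) / 2 : ℝ) : ℂ) + Complex.sin (((x + π) / 2 : ℝ) : ℂ) * Complex.I)
   = 1 - Complex.exp (x * Complex.I) := by
    rw [one_sub_exp]
    have e : (x + π) / 2 = (x - π) / 2 + π := by ring
    rw [← Complex.ofReal_cos, ← Complex.ofReal_sin, ← Complex.ofReal_cos, ← Complex.ofReal_sin, e, Real.cos_add_pi, Real.sin_add_pi]
    push_cast
    ring
  rw [e] at h
  rw [sawS, Complex.neg_im, Complex.log_im, h]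
  ring

lemma saw_bound {x : ℝ} (hx : Real.sin (x / 2) ≠ 0) (N : ℕ) :
    |sawS x - ∑ i ∈ Finset.range N, Real.sin ((i + 1) * x) / (i + 1)|
      ≤ (1 / |Real.sin (x / 2)|) / (N + 1) := by
  have hn : ‖1 - Complex.exp (x * Complex.I)‖ = 2 * |Real.sin (x / 2)| := by
    rw [one_sub_exp, norm_mul, Complex.norm_cos_add_sin_mul_I, Complex.norm_real]
    simp
  have hp : 0 < |Real.sin (x / 2)| := abs_pos.2 hx
  have hne : Complex.exp (x * Complex.I) ≠ 1 := by
    intro h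
    rw [h] at hn
    simp at hn
    exact hx hn
  have h := logsum_le _ (Complex.norm_exp_ofReal_mul_I x) hne N
  rw [norm_mul, hn] at h
  have him := Complex.abs_im_le_norm (-Complex.log (1 - Complex.exp (x * Complex.I)) - ∑ i ∈ Finset.range N, Complex.exp (x * Complex.I) ^ (i + 1) / ((i + 1 : ℕ) : ℂ))
  rw [Complex.sub_im, Complex.im_sum] at him
  have e : ∀ i ∈ Finset.range N, (Complex.exp (x * Complex.I) ^ (i + 1) / ((i + 1 : ℕ) : ℂ)).im = Real.sin ((i + 1) * x) / (i + 1) := by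
    intro i _
    rw [← Complex.exp_nat_mul, Complex.div_natCast_im]
    have : ((i + 1 : ℕ) : ℂ) * (x * Complex.I) = (((i + 1) * x : ℝ) : ℂ) * Complex.I := by push_cast; ring
    rw [this, Complex.exp_ofReal_mul_I_im]
    push_cast; rfl
  rw [Finset.sum_congr rfl e] at him
  refine him.trans ?_
  rw [div_div, le_div_iff₀ (by positivity)]
  rw [le_div_iff₀ (by positivity)] at h
  linarith

lemma saw_bound_zero (N : ℕ) :
    |sawS 0 - ∑ i ∈ Finset.range N, Real.sin ((i + 1) * 0) / (i + 1)| ≤ 0 := by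
  simp [sawS_zero]

lemma step_eq {a b θ : ℝ} (ha : -1 < a) (hab : a < b) (hb : b < 1) (h0 : 0 ≤ θ) (hπ : θ ≤ π) :
    stepS a b (Real.cos θ) = (1 / π) * ((arccos a - arccos b) + (sawS (θ + arccos a) - sawS (θ - arccos a))
      - (sawS (θ + arccos b) - sawS (θ - arccos b))) := by
  have hca : Real.cos (arccos a) = a := Real.cos_arccos ha.le (by linarith)
  have hcb : Real.cos (arccos b) = b := Real.cos_arccos (by linarith) hb.le
  have hα : arccos a < π := by
    refine lt_of_le_of_ne (Real.arccos_le_pi a) fun h => ?_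
    rw [h, Real.cos_pi] at hca; linarith
  have hβ : 0 < arccos b := Real.arccos_pos.2 hb
  have hβα : arccos b < arccos a := Real.strictAntiOn_arccos ⟨ha.le, by linarith⟩ ⟨by linarith, hb.le⟩ hab
  generalize arccos a = α at *
  generalize arccos b = β at *
  subst hca hcb
  have key : ∀ x y : ℝ, 0 ≤ x → x ≤ π → 0 ≤ y → y ≤ π → (Real.cos x < Real.cos y ↔ y < x) := fun x y h1 h2 h3 h4 =>
    Real.strictAntiOn_cos.lt_iff_gt ⟨h1, h2⟩ ⟨h3, h4⟩
  have keq : ∀ x y : ℝ, 0 ≤ x → x ≤ π → 0 ≤ y → y ≤ π → (Real.cos x = Real.cos y ↔ x = y) := fun x y h1 h2 h3 h4 =>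
    Real.injOn_cos.eq_iff ⟨h1, h2⟩ ⟨h3, h4⟩
  have hp := Real.pi_pos
  simp only [stepS, keq θ α h0 hπ (by linarith) hα.le, keq θ β h0 hπ (by linarith) (by linarith), Set.mem_Ioo,
    key α θ (by linarith) hα.le h0 hπ, key θ β h0 hπ (by linarith) (by linarith)]
  rw [sawS_pos (x := θ + α) (by linarith) (by linarith), sawS_pos (x := θ + β) (by linarith) (by linarith)]
  rcases lt_trichotomy θ β with h | h | h
  · rw [if_neg (by rintro (h | h) <;> linarith), if_neg (by rintro ⟨h, h'⟩; linarith), sawS_neg (x := θ - α) (by linarith) (by linarith),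
      sawS_neg (x := θ - β) (by linarith) (by linarith)]
    ring
  · subst h
    rw [if_pos (Or.inr rfl), sub_self, sawS_zero, sawS_neg (x := θ - α) (by linarith) (by linarith)]
    field_simp; ring
  · rw [sawS_pos (x := θ - β) (by linarith) (by linarith)]
    rcases lt_trichotomy θ α with h' | h' | h'
    · rw [if_neg (by rintro (h | h) <;> linarith), if_pos ⟨h', h⟩, sawS_neg (x := θ - α) (by linarith) (by linarith)]
      field_simp; ring
    · subst h'
      rw [if_pos (Or.inl rfl), sub_self, sawS_zero]
      field_simp; ring
    · rw [if_neg (by rintro (h | h) <;> linarith), if_neg (by rintro ⟨h, h'⟩; linarith), sawS_pos (x := θ - α) (by linarith) (by linarith)]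
      field_simp; ring

lemma partial_eq (α β θ : ℝ) (N : ℕ) :
    ∑ j ∈ Finset.range (N + 1), fourierC α β j * Real.cos (j * θ) = (1 / π) * ((α - β) + 
      (∑ i ∈ Finset.range N, Real.sin ((i + 1) * (θ + α)) / (i + 1) - ∑ i ∈ Finset.range N, Real.sin ((i + 1) * (θ - α)) / (i + 1))
      - (∑ i ∈ Finset.range N, Real.sin ((i + 1) * (θ + β)) / (i + 1) - ∑ i ∈ Finset.range N, Real.sin ((i + 1) * (θ - β)) / (i + 1))) := by
  induction N with
  | zero => simp [fourierC]; ring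
  | succ N ih =>
    rw [Finset.sum_range_succ, ih]
    simp only [Finset.sum_range_succ _ N, fourierC, mul_add ((N : ℝ) + 1), mul_sub ((N : ℝ) + 1), Real.sin_add, Real.sin_sub]
    push_cast
    ring

lemma fourier_err {a b θ : ℝ} (ha : -1 < a) (hab : a < b) (hb : b < 1) (h0 : 0 ≤ θ) (hπ : θ ≤ π) (N : ℕ) :
    |stepS a b (Real.cos θ) - ∑ j ∈ Finset.range (N + 1), fourierC (arccos a) (arccos b) j * Real.cos (j * θ)|
      ≤ Jfun (arccos a) (arccos b) θ / (π * (N + 1)) := by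
  rw [step_eq ha hab hb h0 hπ, partial_eq]
  have hα : arccos a < π := by
    refine lt_of_le_of_ne (Real.arccos_le_pi a) fun h => ?_
    have hca : Real.cos (arccos a) = a := Real.cos_arccos ha.le (by linarith)
    rw [h, Real.cos_pi] at hca; linarith
  have hβ : 0 < arccos b := Real.arccos_pos.2 hb
  have hβα : arccos b < arccos a := Real.strictAntiOn_arccos ⟨ha.le, by linarith⟩ ⟨by linarith, hb.le⟩ hab
  generalize arccos a = α at *
  generalize arccos b = β at *
  have hp := Real.pi_pos
  have hsp : ∀ x : ℝ, 0 < x → x < 2 * π → Real.sin (x / 2) ≠ 0 := fun x h1 h2 =>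
    (Real.sin_pos_of_pos_of_lt_pi (by linarith) (by linarith)).ne'
  have hsn : ∀ x : ℝ, x ≠ 0 → |x| < 2 * π → Real.sin (x / 2) ≠ 0 := by
    intro x h1 h2
    rcases lt_or_gt_of_ne h1 with h | h
    · exact (Real.sin_neg_of_neg_of_neg_pi_lt (by linarith) (by linarith [(abs_lt.1 h2).1])).ne
    · exact hsp x h (abs_lt.1 h2).2
  have b1 := saw_bound (hsp (θ + α) (by linarith) (by linarith)) N
  have b3 := saw_bound (hsp (θ + β) (by linarith) (by linarith)) N
  have comb : ∀ A B C D A' B' C' D' x y z w J : ℝ, |A - A'| ≤ x / (N + 1) → |B - B'| ≤ y / (N + 1) → |C - C'| ≤ z / (N + 1) → |D - D'| ≤ w / (N + 1)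
     → x + y + z + w = J → |(1 / π) * ((α - β) + (A - B) - (C - D)) - (1 / π) * ((α - β) + (A' - B') - (C' - D'))| ≤ J / (π * (N + 1)) := by
    intro A B C D A' B' C' D' x y z w J h1 h2 h3 h4 h5
    have : (1 / π) * ((α - β) + (A - B) - (C - D)) - (1 / π) * ((α - β) + (A' - B') - (C' - D')) = (1 / π) * ((A - A') - (B - B') - (C - C') + (D - D')) := by ring
    rw [this, abs_mul, abs_of_pos (by positivity), ← h5]
    have e : (x + y + z + w) / (π * (N + 1)) = (1 / π) * (x / (N + 1) + y / (N + 1) + z / (N + 1) + w / (N + 1)) := by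
      field_simp
    rw [e]
    gcongr
    rw [abs_le] at *
    constructor <;> linarith
  rw [Jfun]
  split_ifs with h1 h2
  · subst h1
    have b2 := saw_bound_zero N
    have b4 := saw_bound (hsn (θ - β) (by intro h; linarith) (abs_lt.2 ⟨by linarith, by linarith⟩)) N
    rw [sub_self]
    refine comb _ _ _ _ _ _ _ _ _ 0 _ _ _ b1 (by simpa using b2) b3 b4 ?_
    rw [show (θ + θ) / 2 = θ by ring]; ring
  · subst h2
    have b4 := saw_bound_zero N
    have b2 := saw_bound (hsn (θ - α) (sub_ne_zero.2 h1) (abs_lt.2 ⟨by linarith, by linarith⟩)) N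
    rw [sub_self]
    refine comb _ _ _ _ _ _ _ _ _ _ _ 0 _ b1 b2 b3 (by simpa using b4) ?_
    have : |Real.sin ((θ - α) / 2)| = |Real.sin ((α - θ) / 2)| := by
      rw [← abs_neg, ← Real.sin_neg]; congr 2; ring
    rw [show (θ + θ) / 2 = θ by ring, add_comm θ α, this]; ring
  · have b2 := saw_bound (hsn (θ - α) (sub_ne_zero.2 h1) (abs_lt.2 ⟨by linarith, by linarith⟩)) N
    have b4 := saw_bound (hsn (θ - β) (sub_ne_zero.2 h2) (abs_lt.2 ⟨by linarith, by linarith⟩)) N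
    exact comb _ _ _ _ _ _ _ _ _ _ _ _ _ b1 b2 b3 b4 rfl

lemma sin_sub_nonneg {u : ℝ} (h0 : 0 < u) (h1 : u < π) : 0 ≤ Real.sin u - u * Real.cos u := by
  have hs := Real.sin_pos_of_pos_of_lt_pi h0 h1
  rcases lt_or_ge u (π / 2) with h | h
  · have hc : 0 < Real.cos u := Real.cos_pos_of_mem_Ioo ⟨by linarith, h⟩
    have := Real.lt_tan h0 h
    rw [Real.tan_eq_sin_div_cos, lt_div_iff₀ hc] at this
    linarith
  · have hc : Real.cos u ≤ 0 := Real.cos_nonpos_of_pi_div_two_le_of_le h (by linarith)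
    nlinarith

/-- integrand -/
noncomputable def fI (m u : ℝ) : ℝ :=
  Real.sin u ^ (m - 1) * (Real.sin u - u * Real.cos u) / u ^ (m + 2)

lemma fI_nonneg {m u : ℝ} (h0 : 0 < u) (h1 : u < π) : 0 ≤ fI m u := by
  have hs := Real.sin_pos_of_pos_of_lt_pi h0 h1
  have := sin_sub_nonneg h0 h1
  unfold fI
  positivity

lemma fI_eq {m u : ℝ} (h0 : 0 < u) (h1 : u < π) :
    fI m u = sinc u ^ (m - 1) * ((Real.sin u - u * Real.cos u) / u ^ 3) := by
  have hs := Real.sin_pos_of_pos_of_lt_pi h0 h1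
  rw [fI, sinc_of_ne_zero h0.ne', Real.div_rpow hs.le h0.le, show m + 2 = (m - 1) + (3 : ℕ) by push_cast; ring,
    Real.rpow_add h0, Real.rpow_natCast]
  have : u ^ (m - 1) ≠ 0 := (Real.rpow_pos_of_pos h0 _).ne'
  field_simp

lemma sinc_pos' {u : ℝ} (h0 : 0 ≤ u) (h1 : u < π) : 0 < sinc u := by
  rcases h0.eq_or_lt with h | h
  · simp [← h]
  · rw [sinc_of_ne_zero h.ne']
    exact div_pos (Real.sin_pos_of_pos_of_lt_pi h h1) h

lemma sinc_nonneg' {u : ℝ} (h0 : 0 ≤ u) (h1 : u ≤ π) : 0 ≤ sinc u := by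
  rcases h1.eq_or_lt with h | h
  · rw [h, sinc_of_ne_zero Real.pi_ne_zero]; simp
  · exact (sinc_pos' h0 h).le

lemma hasDeriv_g {m u : ℝ} (h0 : 0 < u) (h1 : u < π) :
    HasDerivAt (fun u => - sinc u ^ m) (m * (u * fI m u)) u := by
  have hd : HasDerivAt sinc ((Real.cos u * u - Real.sin u * 1) / u ^ 2) u := by
    refine ((Real.hasDerivAt_sin u).div (hasDerivAt_id u) h0.ne').congr_of_eventuallyEq ?_
    filter_upwards [isOpen_ne.mem_nhds h0.ne'] with x hx
    simp [sinc_of_ne_zero hx]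
  have := (hd.rpow_const (p := m) (Or.inl (sinc_pos' h0.le h1).ne')).neg
  have e : m * (u * fI m u) = -((Real.cos u * u - Real.sin u * 1) / u ^ 2 * m * sinc u ^ (m - 1)) := by
    rw [fI_eq h0 h1]
    field_simp
    ring
  rw [e]
  exact this

lemma cont_g {m : ℝ} (hm : 0 < m) : Continuous (fun u => - sinc u ^ m) :=
  (continuous_sinc.rpow_const (fun _ => Or.inr hm.le)).neg

lemma integrable_g {m : ℝ} (hm : 0 < m) : IntegrableOn (fun u => m * (u * fI m u)) (Set.Ioc 0 π) := by
  apply intervalIntegral.integrableOn_deriv_of_nonneg (cont_g hm).continuousOn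
  · intro x hx; exact hasDeriv_g hx.1 hx.2
  · intro x hx
    have := fI_nonneg (m := m) hx.1 hx.2
    have := hx.1
    positivity

lemma measurable_fI (m : ℝ) : Measurable (fI m) := by
  unfold fI; fun_prop

lemma integrable_fI {m : ℝ} (hm : 0 < m) : IntegrableOn (fI m) (Set.Ioo 0 π) := by
  have hp := Real.pi_gt_three
  have h1 : IntegrableOn (fI m) (Set.Icc 0 1 ∩ Set.Ioi 0) := by
    have hc : IntegrableOn (fun u => sinc u ^ (m - 1)) (Set.Icc 0 1) := by
      apply ContinuousOn.integrableOn_Icc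
      apply ContinuousOn.rpow_const continuous_sinc.continuousOn
      intro x hx; left
      exact (sinc_pos' hx.1 (by linarith [hx.2])).ne'
    refine Integrable.mono' (hc.mono_set Set.inter_subset_left) (measurable_fI m).aestronglyMeasurable ?_
    refine (ae_restrict_iff' (measurableSet_Icc.inter measurableSet_Ioi)).2 (.of_forall fun u hu => ?_)
    have hu0 : 0 < u := hu.2
    have hu1 : u < π := by linarith [hu.1.2]
    rw [Real.norm_of_nonneg (fI_nonneg hu0 hu1), fI_eq hu0 hu1]
    have h3 : (Real.sin u - u * Real.cos u) / u ^ 3 ≤ 1 := by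
      rw [div_le_one (by positivity)]
      have := Real.sin_le hu0.le
      have := Real.one_sub_sq_div_two_le_cos (x := u)
      nlinarith [pow_pos hu0 3]
    have := Real.rpow_nonneg (sinc_pos' hu0.le hu1).le (m - 1)
    nlinarith
  have h2 : IntegrableOn (fI m) (Set.Ioo 1 π) := by
    have hi : IntegrableOn (fun u => m⁻¹ * (m * (u * fI m u))) (Set.Ioo 1 π) :=
      ((integrable_g hm).mono_set (fun x hx => ⟨by linarith [hx.1], hx.2.le⟩)).const_mul _
    refine Integrable.mono' hi (measurable_fI m).aestronglyMeasurable ?_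
    refine (ae_restrict_iff' measurableSet_Ioo).2 (.of_forall fun u hu => ?_)
    have hf := fI_nonneg (m := m) (by linarith [hu.1]) hu.2
    rw [Real.norm_of_nonneg hf, inv_mul_cancel_left₀ hm.ne']
    nlinarith [hu.1]
  refine (h1.union h2).mono_set fun x hx => ?_
  rcases le_or_gt x 1 with h | h
  · exact Or.inl ⟨⟨hx.1.le, h⟩, hx.1⟩
  · exact Or.inr ⟨h, hx.2⟩

lemma ii_fI {m p q : ℝ} (hm : 0 < m) (hp : 0 ≤ p) (hpq : p ≤ q) (hq : q < π) :
    IntervalIntegrable (fI m) volume p q := by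
  rw [intervalIntegrable_iff_integrableOn_Ioc_of_le hpq]
  exact (integrable_fI hm).mono_set fun x hx => ⟨by linarith [hx.1], by linarith [hx.2]⟩

lemma piece {m p q : ℝ} (hm : 0 < m) (hp : 0 ≤ p) (hpq : p ≤ q) (hq : q < π) :
    sinc p ^ m - sinc q ^ m ≤ q * (m * ∫ u in p..q, fI m u) := by
  have hint : IntervalIntegrable (fun u => m * (u * fI m u)) volume p q := by
    rw [intervalIntegrable_iff_integrableOn_Ioc_of_le hpq]
    exact (integrable_g hm).mono_set fun x hx => ⟨by linarith [hx.1], by linarith [hx.2]⟩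
  have h := intervalIntegral.integral_eq_sub_of_hasDerivAt_of_le hpq (cont_g hm).continuousOn
    (fun x hx => hasDeriv_g (by linarith [hx.1]) (by linarith [hx.2])) hint
  have e : sinc p ^ m - sinc q ^ m = ∫ u in p..q, m * (u * fI m u) := by rw [h]; ring
  rw [e, ← intervalIntegral.integral_const_mul, ← intervalIntegral.integral_const_mul]
  apply intervalIntegral.integral_mono_on_of_le_Ioo hpq hint (((ii_fI hm hp hpq hq).const_mul _).const_mul _)
  intro x hx
  have hf := fI_nonneg (m := m) (u := x) (by linarith [hx.1]) (by linarith [hx.2])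
  have : x * (m * fI m x) ≤ q * (m * fI m x) := by
    gcongr
    exact hx.2.le
  linarith

lemma anti_g {m p q : ℝ} (hm : 0 < m) (hp : 0 ≤ p) (hpq : p ≤ q) (hq : q < π) :
    sinc q ^ m ≤ sinc p ^ m := by
  have hint : IntervalIntegrable (fun u => m * (u * fI m u)) volume p q := by
    rw [intervalIntegrable_iff_integrableOn_Ioc_of_le hpq]
    exact (integrable_g hm).mono_set fun x hx => ⟨by linarith [hx.1], by linarith [hx.2]⟩
  have h := intervalIntegral.integral_eq_sub_of_hasDerivAt_of_le hpq (cont_g hm).continuousOn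
    (fun x hx => hasDeriv_g (by linarith [hx.1]) (by linarith [hx.2])) hint
  have : 0 ≤ ∫ u in p..q, m * (u * fI m u) := by
    apply intervalIntegral.integral_nonneg_of_ae_restrict hpq
    refine (ae_restrict_iff' measurableSet_Icc).2 (.of_forall fun u hu => ?_)
    have hu0 : 0 ≤ u := hp.trans hu.1
    rcases hu0.eq_or_lt with h | h
    · simp [← h]
    · have hf := fI_nonneg (m := m) (u := u) h (by linarith [hu.2])
      simp only [Pi.zero_apply]
      positivity
  linarith

lemma dampL_eq (m : ℝ) (k j : ℕ) : dampL m k j = sinc (j * (π / (k + 1))) ^ m := by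
  unfold dampL
  split_ifs with h
  · simp [h]
  · have : (j : ℝ) * (π / (k + 1)) ≠ 0 := by positivity
    rw [sinc_of_ne_zero this, mul_div_assoc]

lemma node_lt {k j : ℕ} (h : j ≤ k) : (j : ℝ) * (π / (k + 1)) < π := by
  have : (j : ℝ) ≤ k := by exact_mod_cast h
  have hp := Real.pi_pos
  rw [← mul_div_assoc, div_lt_iff₀ (by positivity)]
  nlinarith

lemma sum_damp {m : ℝ} (hm : 0 < m) {k k' : ℕ} (h : k' ≤ k) :
    ∑ j ∈ Finset.range k', (dampL m k j - dampL m k (j + 1)) / (π * (j + 1)) ≤ m * lanczosCm m / (k + 1) := by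
  have hp := Real.pi_pos
  have step : ∀ j ∈ Finset.range k', (dampL m k j - dampL m k (j + 1)) / (π * (j + 1))
      ≤ (m / (k + 1)) * ∫ u in ((j : ℕ) * (π / (k + 1)))..((j + 1 : ℕ) * (π / (k + 1))), fI m u := by
    intro j hj
    have hj' : j + 1 ≤ k := by have := Finset.mem_range.1 hj; omega
    rw [dampL_eq, dampL_eq, div_le_iff₀ (by positivity)]
    refine (piece hm (by positivity) ?_ (node_lt hj')).trans (le_of_eq ?_)
    · gcongr; omega
    · push_cast; field_simp
  refine (Finset.sum_le_sum step).trans ?_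
  rw [← Finset.mul_sum, intervalIntegral.sum_integral_adjacent_intervals (a := fun j : ℕ => (j : ℝ) * (π / (k + 1)))]
  · rw [mul_div_right_comm]
    have : (∫ u in ((0 : ℕ) * (π / (k + 1)))..((k' : ℕ) * (π / (k + 1))), fI m u) ≤ lanczosCm m := by
      rw [Nat.cast_zero, zero_mul, intervalIntegral.integral_of_le (by positivity)]
      apply setIntegral_mono_set (integrable_fI hm)
      · refine (ae_restrict_iff' measurableSet_Ioo).2 (.of_forall fun u hu => fI_nonneg hu.1 hu.2)
      · apply LE.le.eventuallyLE
        intro x hx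
        exact ⟨hx.1, hx.2.trans_lt (node_lt h)⟩
    gcongr
  · intro j hj
    exact ii_fI hm (by positivity) (by gcongr; omega) (node_lt (by omega))

lemma Jfun_nonneg (α β θ : ℝ) : 0 ≤ Jfun α β θ := by
  unfold Jfun; split_ifs <;> positivity

lemma abel_sum (s : ℝ) (d e : ℕ → ℝ) (K : ℕ) :
    d 0 * s - ∑ j ∈ Finset.range (K + 1), e j * d j = 
      ∑ j ∈ Finset.range K, (d j - d (j + 1)) * (s - ∑ i ∈ Finset.range (j + 1), e i)
       + d K * (s - ∑ i ∈ Finset.range (K + 1), e i) := by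
  induction K with
  | zero => simp; ring
  | succ K ih =>
    rw [Finset.sum_range_succ, ← sub_sub, ih, Finset.sum_range_succ (fun j => (d j - d (j + 1)) * (s - ∑ i ∈ Finset.range (j + 1), e i)) K, Finset.sum_range_succ e (K + 1)]
    ring

lemma scalar_bound {a b θ : ℝ} (ha : -1 < a) (hab : a < b) (hb : b < 1) (h0 : 0 ≤ θ) (hπ : θ ≤ π)
    {m : ℝ} (hm : 0 < m) {k k' : ℕ} (h : k' ≤ k) :
    |stepS a b (Real.cos θ) - ∑ j ∈ Finset.range (k' + 1), fourierC (arccos a) (arccos b) j * dampL m k j * Real.cos (j * θ)|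
      ≤ dampL m k k' * Jfun (arccos a) (arccos b) θ / (π * (k' + 1))
        + m * lanczosCm m * Jfun (arccos a) (arccos b) θ / (k + 1) := by
  have hJ := Jfun_nonneg (arccos a) (arccos b) θ
  have e := abel_sum (stepS a b (Real.cos θ)) (dampL m k) (fun j => fourierC (arccos a) (arccos b) j * Real.cos (j * θ)) k'
  have hd0 : dampL m k 0 = 1 := by simp [dampL]
  rw [hd0, one_mul] at e
  have e2 : ∑ j ∈ Finset.range (k' + 1), fourierC (arccos a) (arccos b) j * dampL m k j * Real.cos (j * θ) = 
    ∑ j ∈ Finset.range (k' + 1), fourierC (arccos a) (arccos b) j * Real.cos (j * θ) * dampL m k j :=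
    Finset.sum_congr rfl fun _ _ => by ring
  rw [e2, e, add_comm]
  refine (abs_add_le _ _).trans (add_le_add ?_ ?_)
  · have hd : 0 ≤ dampL m k k' := by
      rw [dampL_eq]
      exact Real.rpow_nonneg (sinc_pos' (by positivity) (node_lt h)).le _
    rw [abs_mul, abs_of_nonneg hd, mul_div_assoc]
    exact mul_le_mul_of_nonneg_left (fourier_err ha hab hb h0 hπ k') hd
  · refine (Finset.abs_sum_le_sum_abs _ _).trans ?_
    have : m * lanczosCm m * Jfun (arccos a) (arccos b) θ / (k + 1) = (m * lanczosCm m / (k + 1)) * Jfun (arccos a) (arccos b) θ := by ring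
    rw [this]
    refine le_trans ?_ (mul_le_mul_of_nonneg_right (sum_damp hm h) hJ)
    rw [Finset.sum_mul]
    apply Finset.sum_le_sum
    intro j hj
    have hj' : j + 1 ≤ k := by have := Finset.mem_range.1 hj; omega
    have hd : 0 ≤ dampL m k j - dampL m k (j + 1) := by
      rw [dampL_eq, dampL_eq, sub_nonneg]
      exact anti_g hm (by positivity) (by gcongr; omega) (node_lt hj')
    rw [abs_mul, abs_of_nonneg hd]
    refine (mul_le_mul_of_nonneg_left (fourier_err ha hab hb h0 hπ j) hd).trans (le_of_eq ?_)
    ring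

open scoped Matrix.Norms.L2Operator in
lemma norm_diag_le {n : ℕ} (U : Matrix (Fin n) (Fin n) ℂ) (hU : U ∈ Matrix.unitaryGroup (Fin n) ℂ)
    (v : Fin n → ℂ) {B : ℝ} (hB : 0 ≤ B) (h : ∀ i, ‖v i‖ ≤ B) :
    ‖Matrix.toEuclideanCLM (𝕜 := ℂ) (U * Matrix.diagonal v * Uᴴ)‖ ≤ B := by
  change ‖U * Matrix.diagonal v * star U‖ ≤ B
  rw [CStarRing.norm_mul_mem_unitary _ (Unitary.star_mem hU), CStarRing.norm_mem_unitary_mul _ hU,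
    Matrix.l2_opNorm_diagonal]
  exact (pi_norm_le_iff_of_nonneg hB).2 h

lemma cheb_diag {n : ℕ} (U : Matrix (Fin n) (Fin n) ℂ) (hU : U ∈ Matrix.unitaryGroup (Fin n) ℂ)
    (v : Fin n → ℂ) (p : ℂ[X]) :
    Polynomial.aeval (U * Matrix.diagonal v * Uᴴ) p = U * Matrix.diagonal (fun i => p.eval (v i)) * Uᴴ := by
  have h1 : U * Matrix.diagonal v * Uᴴ = Unitary.conjStarAlgAut ℂ _ (⟨U, hU⟩ : unitary (Matrix (Fin n) (Fin n) ℂ)) (Matrix.diagonalAlgHom ℂ v) := rfl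
  rw [h1, Polynomial.aeval_algHom_apply, Polynomial.aeval_algHom_apply]
  have : (Polynomial.aeval v) p = fun i => p.eval (v i) := by
    ext i
    have := Polynomial.aeval_algHom_apply (Pi.evalAlgHom ℂ (fun _ : Fin n => ℂ) i) v p
    simpa [Polynomial.coe_aeval_eq_eval] using this.symm
  rw [this]
  rfl

/-- Spectral-norm bound for the approximate spectral projector: for a Hermitian matrix
`A = U diag(λ) U*` with spectrum in `[-1, 1]`,
`‖P − ρ(A)‖₂ ≤ d^m_{k',k} J*/(π(k'+1)) + m C_m J*/(k+1) + mπ²/(3(k+1)²)`,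
where `J* = max_j J(arccos λ_j)`. -/
theorem spectral_projector_error_bound (n : ℕ) (hn : 0 < n)
    (a b : ℝ) (ha : -1 < a) (hab : a < b) (hb : b < 1)
    (A U : Matrix (Fin n) (Fin n) ℂ) (hU : U ∈ Matrix.unitaryGroup (Fin n) ℂ)
    (lam : Fin n → ℝ) (hlam : ∀ i, lam i ∈ Set.Icc (-1 : ℝ) 1)
    (hA : A = U * Matrix.diagonal (fun i => (lam i : ℂ)) * Uᴴ)
    (m : ℝ) (hm : 0 < m) (k k' : ℕ) (hk' : 1 ≤ k') (hk'k : k' ≤ k) :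
    ‖Matrix.toEuclideanCLM (𝕜 := ℂ)
        (U * Matrix.diagonal (fun i => ((stepS a b (lam i) : ℝ) : ℂ)) * Uᴴ
          - chebFilter a b m k k' A)‖
      ≤ dampL m k k' * (⨆ i : Fin n, Jfun (Real.arccos a) (Real.arccos b)
            (Real.arccos (lam i))) / (Real.pi * (k' + 1))
        + m * lanczosCm m * (⨆ i : Fin n, Jfun (Real.arccos a) (Real.arccos b)
            (Real.arccos (lam i))) / (k + 1)
        + m * Real.pi ^ 2 / (3 * (k + 1) ^ 2) := by
  set J := ⨆ i : Fin n, Jfun (Real.arccos a) (Real.arccos b) (Real.arccos (lam i)) with hJdef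
  have hJle : ∀ i, Jfun (Real.arccos a) (Real.arccos b) (Real.arccos (lam i)) ≤ J := fun i =>
    le_ciSup (f := fun i => Jfun (Real.arccos a) (Real.arccos b) (Real.arccos (lam i)))
      (Set.finite_range _).bddAbove i
  have hJ0 : 0 ≤ J := (Jfun_nonneg _ _ _).trans (hJle ⟨0, hn⟩)
  have hd : 0 ≤ dampL m k k' := by
    rw [dampL_eq]
    exact Real.rpow_nonneg (sinc_pos' (by positivity) (node_lt hk'k)).le _
  have hC : 0 ≤ lanczosCm m :=
    setIntegral_nonneg measurableSet_Ioo fun u hu => fI_nonneg hu.1 hu.2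
  have hp := Real.pi_pos
  have hmat : U * Matrix.diagonal (fun i => ((stepS a b (lam i) : ℝ) : ℂ)) * Uᴴ - chebFilter a b m k k' A
      = U * Matrix.diagonal (fun i => ((stepS a b (lam i) - ∑ j ∈ Finset.range (k' + 1),
          fourierC (arccos a) (arccos b) j * dampL m k j * Real.cos (j * arccos (lam i)) : ℝ) : ℂ)) * Uᴴ := by
    have hT : ∀ (j : ℕ) (i : Fin n), (Polynomial.Chebyshev.T ℂ (j : ℤ)).eval (lam i : ℂ)
        = ((Real.cos (j * arccos (lam i)) : ℝ) : ℂ) := by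
      intro j i
      have := Polynomial.Chebyshev.T_complex_cos (arccos (lam i) : ℂ) j
      rw [← Complex.ofReal_cos, Real.cos_arccos (hlam i).1 (hlam i).2] at this
      rw [this]; push_cast; rfl
    have hc : chebFilter a b m k k' A = U * Matrix.diagonal (fun i => ((∑ j ∈ Finset.range (k' + 1),
          fourierC (arccos a) (arccos b) j * dampL m k j * Real.cos (j * arccos (lam i)) : ℝ) : ℂ)) * Uᴴ := by
      have : (fun i => ((∑ j ∈ Finset.range (k' + 1),
          fourierC (arccos a) (arccos b) j * dampL m k j * Real.cos (j * arccos (lam i)) : ℝ) : ℂ))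
          = ∑ j ∈ Finset.range (k' + 1), ((fourierC (arccos a) (arccos b) j * dampL m k j : ℝ) : ℂ) •
            (fun i => ((Real.cos (j * arccos (lam i)) : ℝ) : ℂ)) := by
        ext i
        simp
      rw [this]
      change _ = U * Matrix.diagonalAddMonoidHom (Fin n) ℂ _ * Uᴴ
      rw [map_sum, Finset.mul_sum, Finset.sum_mul, chebFilter]
      refine Finset.sum_congr rfl fun j _ => ?_
      rw [hA, cheb_diag U hU]
      simp only [hT, Matrix.diagonalAddMonoidHom_apply, Matrix.diagonal_smul, Matrix.mul_smul, Matrix.smul_mul]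
    rw [hc, ← sub_mul, ← mul_sub, Matrix.diagonal_sub]
    simp only [Complex.ofReal_sub]
  rw [hmat]
  apply norm_diag_le U hU _ (by positivity)
  intro i
  rw [Complex.norm_real, Real.norm_eq_abs]
  have h := scalar_bound ha hab hb (Real.arccos_nonneg (lam i)) (Real.arccos_le_pi _) hm hk'k
  rw [Real.cos_arccos (hlam i).1 (hlam i).2] at h
  refine h.trans ?_
  have h3 : 0 ≤ m * Real.pi ^ 2 / (3 * ((k : ℝ) + 1) ^ 2) := by positivity
  refine le_trans ?_ (le_add_of_nonneg_right h3)
  have := hJle i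
  gcongr
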